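/- There exist qubit states ρ₀, ρ₁, ρ₂ (2×2 complex positive semidefinite matrices of trace 1) and a three-outcome qubit POVM π₀, π₁, π₂ (2×2 complex positive semidefinite matrices with π₀+π₁+π₂ = I) such that Re Tr[π_β ρ_α] = (A₃)_{αβ} for all α,β ∈ {0,1,2}. In other words, the communication matrix A₃ of unbiased exclusion for a three-letter alphabet admits a quantum realization of dimension 2 (its positive semidefinite rank is at most 2), e.g. by the trine states and the anti-trine measurement. -/

import Mathlib

/-!
The states are the trine: three pure qubit states whose Bloch vectors `n α` are at mutual angles
`2π/3` in a plane. The measurement is the anti-trine `π β = (2/3) P(-n β)`, where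
`P(n) = (1 + n · σ) / 2` is the rank-one projection with Bloch vector `n`; it sums to the identity
because the `n β` sum to zero. Since `Tr (P(m) P(n)) = (1 + m · n) / 2`, the outcome probabilities
are `(1 - n β · n α) / 3`, which is `0` for `α = β` and `(1 + 1/2) / 3 = 1/2` otherwise.
-/


open Matrix
open scoped ComplexOrder

/-- The exclusion communication matrix `A₃` for a three-letter alphabet:
zero diagonal, off-diagonal entries `1/2`. -/
noncomputable def A3 : Matrix (Fin 3) (Fin 3) ℝ := fun i j => if i = j then 0 else 1 / 2

/-- The Hermitian matrix `(1 + c σ_z + s σ_x) / 2` of trace one with Bloch vector `(s, 0, c)`. -/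
noncomputable def blochMat (c s : ℝ) : Matrix (Fin 2) (Fin 2) ℂ :=
  !![(1 + c) / 2, s / 2; s / 2, (1 - c) / 2]

lemma blochMat_trace (c s : ℝ) : (blochMat c s).trace = 1 := by
  simp only [blochMat, Matrix.trace_fin_two_of]
  ring

/-- A unit Bloch vector gives a Hermitian idempotent, hence a positive semidefinite matrix. -/
lemma blochMat_posSemidef {c s : ℝ} (h : c ^ 2 + s ^ 2 = 1) : (blochMat c s).PosSemidef := by
  have hc : (c : ℂ) ^ 2 + (s : ℂ) ^ 2 = 1 := by exact_mod_cast h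
  have hP : (blochMat c s)ᴴ * blochMat c s = blochMat c s := by
    ext i j
    fin_cases i <;> fin_cases j <;>
      simp [blochMat, Matrix.mul_apply, Fin.sum_univ_two, Complex.conj_ofNat]
    · linear_combination hc / 4
    · ring
    · ring
    · linear_combination hc / 4
  rw [← hP]
  exact Matrix.posSemidef_conjTranspose_mul_self _

lemma blochMat_mul_trace_re (c s c' s' : ℝ) :
    (((2 / 3 : ℂ) • blochMat c s * blochMat c' s').trace).re = (1 + c * c' + s * s') / 3 := by
  have h : ((2 / 3 : ℂ) • blochMat c s * blochMat c' s').trace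
      = (((1 + c * c' + s * s') / 3 : ℝ) : ℂ) := by
    simp [blochMat, Matrix.trace_fin_two]
    ring
  rw [h, Complex.ofReal_re]

/-- The `σ_z` components (cosines) of the trine Bloch vectors. -/
noncomputable def trineCos : Fin 3 → ℝ := ![1, -1 / 2, -1 / 2]

/-- The `σ_x` components (sines) of the trine Bloch vectors. -/
noncomputable def trineSin : Fin 3 → ℝ := ![0, √3 / 2, -√3 / 2]

lemma trine_unit (α : Fin 3) : trineCos α ^ 2 + trineSin α ^ 2 = 1 := by
  have h3 : √3 ^ 2 = (3 : ℝ) := Real.sq_sqrt (by norm_num)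
  fin_cases α <;> simp [trineCos, trineSin] <;> linarith

/-- The communication matrix `A₃` admits a qubit (dimension-2) quantum realization:
its positive semidefinite rank is at most `2`. -/
theorem stmt11 :
    ∃ (ρ : Fin 3 → Matrix (Fin 2) (Fin 2) ℂ) (π : Fin 3 → Matrix (Fin 2) (Fin 2) ℂ),
      (∀ α, (ρ α).PosSemidef ∧ (ρ α).trace = 1) ∧
      (∀ β, (π β).PosSemidef) ∧
      (∑ β : Fin 3, π β = 1) ∧
      (∀ α β, ((π β * ρ α).trace).re = A3 α β) := by
  refine ⟨fun α => blochMat (trineCos α) (trineSin α),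
    fun β => (2 / 3 : ℂ) • blochMat (-trineCos β) (-trineSin β),
    fun α => ⟨blochMat_posSemidef (trine_unit α), blochMat_trace _ _⟩, fun β => ?_, ?_, ?_⟩
  · refine (blochMat_posSemidef ?_).smul ?_
    · simpa using trine_unit β
    · positivity
  · ext i j
    fin_cases i <;> fin_cases j <;>
      simp [Fin.sum_univ_three, blochMat, trineCos, trineSin] <;> ring
  · intro α β
    have h3 : √3 ^ 2 = (3 : ℝ) := Real.sq_sqrt (by norm_num)
    rw [blochMat_mul_trace_re]
    fin_cases α <;> fin_cases β <;> simp [A3, trineCos, trineSin] <;> nlinarith only [h3]
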